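/- arXiv:1306.6906 — 6 statements merged into one kernel-verified Lean document; each statement's English description precedes it below -/
import Mathlib

section
/- For all ρ > 0 and β > 0, the integral of the diagonal of the Mehler kernel is ∫_ℝ k_β(x,x) dx = 1/(2 sinh(β√(ρ/2))). -/
/-!
Write `w = √(2ρ)` and `u = β √(ρ/2)`, so that `β w = 2u`. On the diagonal the exponent of the Mehler
kernel is `-w x² (cosh 2u - 1) / sinh 2u = -(w tanh u) x²` by the half-angle formulas, so the
integral is Gaussian and equals `√w / √(2π sinh 2u) · √(π / (w tanh u))`. Since
`sinh 2u · tanh u = 2 sinh² u`, this is `√(1 / (4 sinh² u)) = 1 / (2 sinh u)`.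
-/

/-- The Mehler kernel: the integral kernel of the harmonic-oscillator semigroup
`exp(−tA)`, `A = −(1/2) d²/dx² + ρ x²`:
`k_t(x,y) = (2ρ)^{1/4} / √(2π sinh(t√(2ρ))) ·
  exp( −√(2ρ)(x²+y²)/(2 tanh(t√(2ρ))) + √(2ρ) x y / sinh(t√(2ρ)) )`. -/
noncomputable def mehlerKernel (ρ t x y : ℝ) : ℝ :=
  (2 * ρ) ^ ((1 : ℝ) / 4) / Real.sqrt (2 * Real.pi * Real.sinh (t * Real.sqrt (2 * ρ)))
    * Real.exp (-(Real.sqrt (2 * ρ) * (x ^ 2 + y ^ 2)) / (2 * Real.tanh (t * Real.sqrt (2 * ρ)))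
        + Real.sqrt (2 * ρ) * x * y / Real.sinh (t * Real.sqrt (2 * ρ)))

/-- Proposition A.1, Eq. (35): the trace of the harmonic-oscillator semigroup,
computed as the integral of the diagonal of the Mehler kernel:
`∫ k_β(x,x) dx = 1/(2 sinh(β √(ρ/2)))`. -/
theorem mehlerKernel_integral_diag (ρ β : ℝ) (hρ : 0 < ρ) (hβ : 0 < β) :
    ∫ x : ℝ, mehlerKernel ρ β x x = 1 / (2 * Real.sinh (β * Real.sqrt (ρ / 2))) := by
  obtain ⟨w, hw⟩ : ∃ w, w = Real.sqrt (2 * ρ) := ⟨_, rfl⟩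
  obtain ⟨u, hu⟩ : ∃ u, u = β * Real.sqrt (ρ / 2) := ⟨_, rfl⟩
  have hw0 : 0 < w := hw ▸ Real.sqrt_pos.mpr (by positivity)
  have hu0 : 0 < u := hu ▸ mul_pos hβ (Real.sqrt_pos.mpr (by positivity))
  have hwu : β * w = 2 * u := by
    have h : Real.sqrt (2 * ρ) = 2 * Real.sqrt (ρ / 2) := by
      rw [show 2 * ρ = 2 ^ 2 * (ρ / 2) by ring, Real.sqrt_mul (by positivity),
        Real.sqrt_sq (by norm_num)]
    rw [hw, hu, h]; ring
  have hs : 0 < Real.sinh u := Real.sinh_pos_iff.mpr hu0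
  have hc : 0 < Real.cosh u := Real.cosh_pos u
  have hC : 0 < Real.cosh (2 * u) := Real.cosh_pos _
  have hfun : ∀ x : ℝ, mehlerKernel ρ β x x =
      Real.sqrt w / Real.sqrt (2 * Real.pi * Real.sinh (2 * u))
        * Real.exp (-(w * Real.sinh u / Real.cosh u) * x ^ 2) := by
    intro x
    have ha : (2 * ρ) ^ ((1 : ℝ) / 4) = Real.sqrt w := by
      rw [hw, Real.sqrt_eq_rpow, Real.sqrt_eq_rpow, ← Real.rpow_mul (by positivity)]
      norm_num
    have hexp : -(w * (x ^ 2 + x ^ 2)) / (2 * Real.tanh (2 * u))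
        + w * x * x / Real.sinh (2 * u) = -(w * Real.sinh u / Real.cosh u) * x ^ 2 := by
      have hcosh : Real.cosh (2 * u) = 1 + 2 * Real.sinh u ^ 2 := by
        rw [Real.cosh_two_mul, Real.cosh_sq]; ring
      rw [Real.tanh_eq_sinh_div_cosh, Real.sinh_two_mul]
      field_simp
      rw [hcosh]
      ring
    rw [mehlerKernel, ← hw, hwu, ha, hexp]
  simp_rw [hfun]
  rw [MeasureTheory.integral_const_mul, integral_gaussian, ← hu,
    ← Real.sqrt_div hw0.le, ← Real.sqrt_mul (by rw [Real.sinh_two_mul]; positivity),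
    Real.sqrt_eq_iff_mul_self_eq_of_pos (by positivity), Real.sinh_two_mul]
  field_simp
end

section
/- For all ρ > 0, β > 0 and x ∈ ℝ, the diagonal of the Mehler kernel equals k_β(x,x) = (1/(2 sinh(β√(ρ/2)))) · (2πσ²)^{−1/2} · exp(−x²/(2σ²)), where σ² := 1/(2√(2ρ) tanh(β√(ρ/2))). In particular x ↦ 2 sinh(β√(ρ/2)) · k_β(x,x) is the density of a centered Gaussian with variance σ². -/
/-- The exponent of the Mehler kernel on the diagonal, in terms of the half angle `u`. -/
lemma mehler_diag_exponent (w u x : ℝ) (hu : 0 < u) :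
    -(w * (x ^ 2 + x ^ 2)) / (2 * Real.tanh (2 * u)) + w * x * x / Real.sinh (2 * u)
      = -(w * x ^ 2) * Real.tanh u := by
  have hs : 0 < Real.sinh u := Real.sinh_pos_iff.2 hu
  have hc : 0 < Real.cosh u := Real.cosh_pos u
  have hcs := Real.cosh_sq u
  have h2 : 0 < Real.cosh u ^ 2 + Real.sinh u ^ 2 := by positivity
  rw [Real.tanh_eq_sinh_div_cosh, Real.tanh_eq_sinh_div_cosh, Real.sinh_two_mul,
    Real.cosh_two_mul]
  field_simp
  linear_combination (-2 * w * x ^ 2) * hcs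

/-- The prefactor of the Mehler kernel on the diagonal, in terms of the half angle `u`. -/
lemma mehler_diag_prefactor (w u : ℝ) (hw : 0 < w) (hu : 0 < u) :
    √w / √(2 * Real.pi * Real.sinh (2 * u))
      = 1 / (2 * Real.sinh u) * (√(2 * Real.pi * (1 / (2 * w * Real.tanh u))))⁻¹ := by
  have hs : 0 < Real.sinh u := Real.sinh_pos_iff.2 hu
  have hc : 0 < Real.cosh u := Real.cosh_pos u
  have hpi := Real.pi_pos
  rw [Real.tanh_eq_sinh_div_cosh, Real.sinh_two_mul]
  refine (sq_eq_sq₀ (by positivity) (by positivity)).1 ?_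
  rw [div_pow, mul_pow, inv_pow, Real.sq_sqrt hw.le, Real.sq_sqrt (by positivity),
    Real.sq_sqrt (by positivity)]
  field_simp

/-- Variance computation of Proposition A.1: the diagonal of the Mehler kernel is
`k_β(x,x) = (2 sinh(β√(ρ/2)))⁻¹ · (2πσ²)^{-1/2} · exp(−x²/(2σ²))` with
`σ² = (2√(2ρ) tanh(β√(ρ/2)))⁻¹`; in particular `2 sinh(β√(ρ/2)) · k_β(x,x)` is the
density of a centered Gaussian with variance `σ²`. -/
theorem mehlerKernel_diag_gaussian (ρ β : ℝ) (hρ : 0 < ρ) (hβ : 0 < β) (x : ℝ)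
    (σ2 : ℝ) (hσ2 : σ2 = 1 / (2 * Real.sqrt (2 * ρ) * Real.tanh (β * Real.sqrt (ρ / 2)))) :
    mehlerKernel ρ β x x =
      (1 / (2 * Real.sinh (β * Real.sqrt (ρ / 2))))
        * (Real.sqrt (2 * Real.pi * σ2))⁻¹ * Real.exp (-(x ^ 2) / (2 * σ2)) ∧
    2 * Real.sinh (β * Real.sqrt (ρ / 2)) * mehlerKernel ρ β x x =
      ProbabilityTheory.gaussianPDFReal 0 σ2.toNNReal x := by
  have hu : 0 < β * √(ρ / 2) := by positivity
  have hw : 0 < √(2 * ρ) := by positivity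
  have hs : 0 < Real.sinh (β * √(ρ / 2)) := Real.sinh_pos_iff.2 hu
  have hwu : β * √(2 * ρ) = 2 * (β * √(ρ / 2)) := by
    have h : √(2 * ρ) = 2 * √(ρ / 2) := by
      rw [show 2 * ρ = 2 ^ 2 * (ρ / 2) by ring, Real.sqrt_mul (by norm_num),
        Real.sqrt_sq (by norm_num)]
    rw [h]; ring
  have hroot : (2 * ρ) ^ ((1 : ℝ) / 4) = √(√(2 * ρ)) := by
    rw [Real.sqrt_eq_rpow, Real.sqrt_eq_rpow, ← Real.rpow_mul (by positivity)]
    norm_num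
  have ht : 0 < Real.tanh (β * √(ρ / 2)) := by
    rw [Real.tanh_eq_sinh_div_cosh]
    exact div_pos hs (Real.cosh_pos _)
  have hσ : 0 < σ2 := by rw [hσ2]; positivity
  have hdiag : mehlerKernel ρ β x x =
      (1 / (2 * Real.sinh (β * Real.sqrt (ρ / 2))))
        * (Real.sqrt (2 * Real.pi * σ2))⁻¹ * Real.exp (-(x ^ 2) / (2 * σ2)) := by
    rw [mehlerKernel, hwu, hroot, mehler_diag_exponent _ _ _ hu, mehler_diag_prefactor _ _ hw hu,
      ← hσ2]
    congr 2
    rw [hσ2]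
    field_simp
  refine ⟨hdiag, ?_⟩
  rw [hdiag, ProbabilityTheory.gaussianPDFReal, Real.coe_toNNReal _ hσ.le, sub_zero]
  field_simp
end

section
/- For all ρ > 0, s > 0, t > 0 and x, z ∈ ℝ, the Mehler kernel satisfies the Chapman–Kolmogorov (semigroup) identity ∫_ℝ k_s(x,y) k_t(y,z) dy = k_{s+t}(x,z). -/
/-- The Mehler kernel with `(2ρ)^{1/4}` rewritten as `√w` and `1 / tanh` as `cosh / sinh`, where
`w = √(2ρ)`. -/
lemma mehlerKernel_eq (ρ t x y : ℝ) (hρ : 0 < ρ) :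
    mehlerKernel ρ t x y =
      √(√(2 * ρ)) / √(2 * Real.pi * Real.sinh (t * √(2 * ρ))) *
        Real.exp (-(√(2 * ρ) * (x ^ 2 + y ^ 2)) * Real.cosh (t * √(2 * ρ))
            / (2 * Real.sinh (t * √(2 * ρ)))
          + √(2 * ρ) * x * y / Real.sinh (t * √(2 * ρ))) := by
  have h4 : (2 * ρ) ^ ((1 : ℝ) / 4) = √(√(2 * ρ)) := by
    rw [Real.sqrt_eq_rpow, Real.sqrt_eq_rpow, ← Real.rpow_mul (by positivity)]
    norm_num
  rw [mehlerKernel, h4, Real.tanh_eq_sinh_div_cosh, ← mul_div_assoc, div_div_eq_mul_div]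

/-- Completing the square in the integration variable `y`. Here `Cᵢ`, `Sᵢ` play the role of
hyperbolic cosines and sines, and the sine and cosine of the sum of the arguments are expanded by
the addition formulas. -/
lemma mehler_exponent (w x y z C₁ S₁ C₂ S₂ : ℝ) (hS₁ : S₁ ≠ 0) (hS₂ : S₂ ≠ 0)
    (hS : S₁ * C₂ + C₁ * S₂ ≠ 0) (h₁ : C₁ ^ 2 = S₁ ^ 2 + 1) (h₂ : C₂ ^ 2 = S₂ ^ 2 + 1) :
    (-(w * (x ^ 2 + y ^ 2)) * C₁ / (2 * S₁) + w * x * y / S₁)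
      + (-(w * (y ^ 2 + z ^ 2)) * C₂ / (2 * S₂) + w * y * z / S₂) =
    -(w * (S₁ * C₂ + C₁ * S₂) / (2 * S₁ * S₂))
        * (y - (x * S₂ + z * S₁) / (S₁ * C₂ + C₁ * S₂)) ^ 2
      + (-(w * (x ^ 2 + z ^ 2)) * (C₁ * C₂ + S₁ * S₂) / (2 * (S₁ * C₂ + C₁ * S₂))
        + w * x * z / (S₁ * C₂ + C₁ * S₂)) := by
  -- The coefficients of `x²` and `z²`: the only places where `cosh² - sinh² = 1` enters.
  have e₁ : C₁ / S₁ = S₂ / (S₁ * (S₁ * C₂ + C₁ * S₂))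
      + (C₁ * C₂ + S₁ * S₂) / (S₁ * C₂ + C₁ * S₂) := by
    field_simp
    linear_combination S₂ * h₁
  have e₂ : C₂ / S₂ = S₁ / (S₂ * (S₁ * C₂ + C₁ * S₂))
      + (C₁ * C₂ + S₁ * S₂) / (S₁ * C₂ + C₁ * S₂) := by
    rw [div_add_div _ _ (mul_ne_zero hS₂ hS) hS, div_eq_div_iff hS₂ (by positivity)]
    linear_combination S₂ * (S₁ * C₂ + C₁ * S₂) * S₁ * h₂
  have e : (-(w * (x ^ 2 + y ^ 2)) * C₁ / (2 * S₁) + w * x * y / S₁)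
      + (-(w * (y ^ 2 + z ^ 2)) * C₂ / (2 * S₂) + w * y * z / S₂) =
      -(w * x ^ 2 / 2) * (C₁ / S₁) - (w * z ^ 2 / 2) * (C₂ / S₂)
      - (w * y ^ 2 / 2) * ((S₁ * C₂ + C₁ * S₂) / (S₁ * S₂))
      + w * x * y / S₁ + w * y * z / S₂ := by
    field_simp
    ring
  rw [e, e₁, e₂]
  generalize C₁ * C₂ + S₁ * S₂ = C
  generalize S₁ * C₂ + C₁ * S₂ = S at *
  field_simp
  ring

lemma mehler_prefactor (w S₁ S₂ S : ℝ) (hw : 0 < w) (hS₁ : 0 < S₁) (hS₂ : 0 < S₂) (hS : 0 < S) :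
    √w / √(2 * Real.pi * S₁) * (√w / √(2 * Real.pi * S₂))
      * √(Real.pi / (w * S / (2 * S₁ * S₂))) = √w / √(2 * Real.pi * S) := by
  have hπ := Real.pi_pos
  rw [← Real.sqrt_div hw.le, ← Real.sqrt_div hw.le, ← Real.sqrt_div hw.le,
    ← Real.sqrt_mul (by positivity), ← Real.sqrt_mul (by positivity)]
  congr 1
  field_simp

/-- Chapman–Kolmogorov (semigroup) identity for the Mehler kernel:
`∫ k_s(x,y) k_t(y,z) dy = k_{s+t}(x,z)`. -/
theorem mehlerKernel_chapman_kolmogorov (ρ s t x z : ℝ) (hρ : 0 < ρ)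
    (hs : 0 < s) (ht : 0 < t) :
    ∫ y : ℝ, mehlerKernel ρ s x y * mehlerKernel ρ t y z = mehlerKernel ρ (s + t) x z := by
  simp_rw [mehlerKernel_eq _ _ _ _ hρ]
  have hw : 0 < √(2 * ρ) := by positivity
  generalize √(2 * ρ) = w at hw ⊢
  have hS₁ : 0 < Real.sinh (s * w) := Real.sinh_pos_iff.2 (by positivity)
  have hS₂ : 0 < Real.sinh (t * w) := Real.sinh_pos_iff.2 (by positivity)
  have hS : 0 < Real.sinh ((s + t) * w) := Real.sinh_pos_iff.2 (by positivity)
  have h₁ := Real.cosh_sq (s * w)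
  have h₂ := Real.cosh_sq (t * w)
  rw [add_mul, Real.sinh_add] at hS
  rw [add_mul, Real.sinh_add, Real.cosh_add]
  simp_rw [mul_mul_mul_comm _ (Real.exp _), ← Real.exp_add,
    mehler_exponent w x _ z _ _ _ _ hS₁.ne' hS₂.ne' hS.ne' h₁ h₂, Real.exp_add (-_ * _)]
  rw [MeasureTheory.integral_const_mul, MeasureTheory.integral_mul_const,
    MeasureTheory.integral_sub_right_eq_self (fun y : ℝ => Real.exp (-_ * y ^ 2)),
    integral_gaussian, ← mul_assoc, mehler_prefactor w _ _ _ hw hS₁ hS₂ hS]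
end

section
/- For all ρ > 0 and every x ∈ ℝ and every bounded continuous function f : ℝ → ℝ, one has lim_{t → 0⁺} ∫_ℝ k_t(x,y) f(y) dy = f(x). -/
/-- The affine change of variables `y = m + σ z` on the line, valid without integrability
assumptions on `g`. -/
lemma integral_eq_mul_integral_comp_affine (g : ℝ → ℝ) (m : ℝ) {σ : ℝ} (hσ : 0 < σ) :
    ∫ y : ℝ, g y = σ * ∫ z : ℝ, g (m + σ * z) := by
  rw [MeasureTheory.Measure.integral_comp_mul_left (fun u => g (m + u)) σ,
    MeasureTheory.integral_add_left_eq_self g m, abs_of_pos (inv_pos.mpr hσ), smul_eq_mul,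
    mul_inv_cancel_left₀ hσ.ne']

/-- The Mehler integral, rewritten as a standard Gaussian average of `f`. -/
lemma integral_mehlerKernel_mul {ρ t : ℝ} (hρ : 0 < ρ) (ht : 0 < t) (x : ℝ) (f : ℝ → ℝ) :
    ∫ y : ℝ, mehlerKernel ρ t x y * f y =
      Real.exp (-(√(2 * ρ) * x ^ 2 * Real.sinh (t * √(2 * ρ))) / (2 * Real.cosh (t * √(2 * ρ))))
        / √(2 * Real.pi * Real.cosh (t * √(2 * ρ))) *
      ∫ z : ℝ, Real.exp (-(1 / 2) * z ^ 2) * f (x / Real.cosh (t * √(2 * ρ)) +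
        √(Real.sinh (t * √(2 * ρ)) / (√(2 * ρ) * Real.cosh (t * √(2 * ρ)))) * z) := by
  have hw : 0 < √(2 * ρ) := Real.sqrt_pos.mpr (by positivity)
  have hquarter : (2 * ρ) ^ ((1 : ℝ) / 4) = √(√(2 * ρ)) := by
    rw [Real.sqrt_eq_rpow, Real.sqrt_eq_rpow, ← Real.rpow_mul (by positivity)]
    norm_num
  unfold mehlerKernel
  rw [hquarter]
  simp only [Real.tanh_eq_sinh_div_cosh]
  set w := √(2 * ρ)
  have hs : 0 < Real.sinh (t * w) := Real.sinh_pos_iff.mpr (by positivity)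
  have hc : 0 < Real.cosh (t * w) := Real.cosh_pos _
  have hcs : Real.cosh (t * w) ^ 2 = Real.sinh (t * w) ^ 2 + 1 := Real.cosh_sq _
  generalize Real.sinh (t * w) = s at *
  generalize Real.cosh (t * w) = c at *
  have hσ : 0 < √(s / (w * c)) := Real.sqrt_pos.mpr (by positivity)
  have hσ2 : √(s / (w * c)) ^ 2 = s / (w * c) := Real.sq_sqrt (by positivity)
  have hpre : √(s / (w * c)) * (√w / √(2 * Real.pi * s)) = 1 / √(2 * Real.pi * c) := by
    rw [← Real.sqrt_div hw.le, ← Real.sqrt_mul (by positivity), ← Real.sqrt_one,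
      ← Real.sqrt_div zero_le_one]
    congr 1
    field_simp
  rw [integral_eq_mul_integral_comp_affine _ (x / c) hσ]
  generalize √(s / (w * c)) = σ at *
  have hexp : ∀ z : ℝ, -(w * (x ^ 2 + (x / c + σ * z) ^ 2)) / (2 * (s / c))
      + w * x * (x / c + σ * z) / s
      = -(w * x ^ 2 * s) / (2 * c) + -(1 / 2) * z ^ 2 := by
    intro z
    have h1 : -(w * (x ^ 2 + (x / c + σ * z) ^ 2)) / (2 * (s / c)) + w * x * (x / c + σ * z) / s
        = -(w * x ^ 2 * (c ^ 2 - 1)) / (2 * s * c) - w * c / (2 * s) * σ ^ 2 * z ^ 2 := by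
      field_simp
      ring
    rw [h1, hσ2, hcs]
    field_simp
    ring
  simp only [hexp, Real.exp_add]
  rw [← MeasureTheory.integral_const_mul, ← MeasureTheory.integral_const_mul]
  congr 1
  funext z
  linear_combination (Real.exp (-(w * x ^ 2 * s) / (2 * c)) * Real.exp (-(1 / 2) * z ^ 2)
    * f (x / c + σ * z)) * hpre

/-- As `t → 0⁺` the Mehler kernel acts as an approximate identity: for every
bounded continuous `f : ℝ → ℝ` and every `x ∈ ℝ`,
`∫ k_t(x,y) f(y) dy → f(x)`. -/
theorem mehlerKernel_approx_identity (ρ : ℝ) (hρ : 0 < ρ) (x : ℝ) (f : ℝ → ℝ)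
    (hf : Continuous f) (hfb : ∃ M : ℝ, ∀ y : ℝ, |f y| ≤ M) :
    Filter.Tendsto (fun t : ℝ => ∫ y : ℝ, mehlerKernel ρ t x y * f y)
      (nhdsWithin 0 (Set.Ioi 0)) (nhds (f x)) := by
  obtain ⟨M, hM⟩ := hfb
  refine Filter.Tendsto.congr' (Filter.eventually_of_mem self_mem_nhdsWithin
    fun t ht => (integral_mehlerKernel_mul hρ ht x f).symm) ?_
  have hw : 0 < √(2 * ρ) := Real.sqrt_pos.mpr (by positivity)
  set w := √(2 * ρ)
  have hgauss : ∫ z : ℝ, Real.exp (-(1 / 2) * z ^ 2) = √(2 * Real.pi) := by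
    rw [integral_gaussian]
    congr 1
    ring
  have hpos : 0 < √(2 * Real.pi) := Real.sqrt_pos.mpr (by positivity)
  have hpre : Filter.Tendsto (fun t : ℝ => Real.exp (-(w * x ^ 2 * Real.sinh (t * w))
      / (2 * Real.cosh (t * w))) / √(2 * Real.pi * Real.cosh (t * w)))
      (nhdsWithin 0 (Set.Ioi 0)) (nhds (1 / √(2 * Real.pi))) := by
    have hcont : Continuous (fun t : ℝ => Real.exp (-(w * x ^ 2 * Real.sinh (t * w))
        / (2 * Real.cosh (t * w))) / √(2 * Real.pi * Real.cosh (t * w))) := by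
      refine Continuous.div (Real.continuous_exp.comp (Continuous.div ?_ ?_ fun t => ?_)) ?_
        fun t => ?_
      · fun_prop
      · fun_prop
      · have := Real.cosh_pos (t * w)
        positivity
      · fun_prop
      · have := Real.cosh_pos (t * w)
        positivity
    simpa using (hcont.tendsto 0).mono_left nhdsWithin_le_nhds
  have hint : Filter.Tendsto (fun t : ℝ => ∫ z : ℝ, Real.exp (-(1 / 2) * z ^ 2) *
      f (x / Real.cosh (t * w) + √(Real.sinh (t * w) / (w * Real.cosh (t * w))) * z))
      (nhdsWithin 0 (Set.Ioi 0)) (nhds (∫ z : ℝ, Real.exp (-(1 / 2) * z ^ 2) * f x)) := by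
    refine MeasureTheory.tendsto_integral_filter_of_dominated_convergence
      (fun z => Real.exp (-(1 / 2) * z ^ 2) * M) ?_ ?_ ?_ ?_
    · exact Filter.Eventually.of_forall fun t =>
        (by fun_prop : Continuous _).aestronglyMeasurable
    · refine Filter.Eventually.of_forall fun t => Filter.Eventually.of_forall fun z => ?_
      rw [norm_mul, Real.norm_of_nonneg (Real.exp_pos _).le]
      exact mul_le_mul_of_nonneg_left (hM _) (Real.exp_pos _).le
    · exact (integrable_exp_neg_mul_sq (by norm_num)).mul_const M
    · refine Filter.Eventually.of_forall fun z => ?_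
      have hcont : Continuous (fun t : ℝ => Real.exp (-(1 / 2) * z ^ 2) *
          f (x / Real.cosh (t * w) + √(Real.sinh (t * w) / (w * Real.cosh (t * w))) * z)) := by
        refine continuous_const.mul (hf.comp (Continuous.add (Continuous.div ?_ ?_ fun t => ?_)
          (Continuous.mul (Real.continuous_sqrt.comp (Continuous.div ?_ ?_ fun t => ?_)) ?_)))
        · fun_prop
        · fun_prop
        · exact (Real.cosh_pos _).ne'
        · fun_prop
        · fun_prop
        · exact (mul_pos hw (Real.cosh_pos _)).ne'
        · fun_prop
      simpa using (hcont.tendsto 0).mono_left nhdsWithin_le_nhds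
  have hmul := hpre.mul hint
  rw [MeasureTheory.integral_mul_const, hgauss, ← mul_assoc, one_div_mul_cancel hpos.ne',
    one_mul] at hmul
  exact hmul
end

section
/- Let λ > 0, C > 0, D > 0 and x, y ∈ ℝ. Then the family of nonnegative terms D^{k'−k} · exp(−C(x − (k − 1/2)λ)² − C(y − (k' − 1/2)λ)²), indexed by pairs of integers (k, k') with k ≤ k', is summable; moreover the resulting sum, as a function of (x, y), is bounded on every compact subset of ℝ². -/
/-!
Writing `D = exp (log D)`, each term is a product of a factor in `(x, k)` and a factor in
`(y, k')`, each of the form `exp (s * k - C * (x - (k - 1/2) * lam) ^ 2)` with `s = ∓ log D`.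
The Gaussian beats the linear exponent: uniformly for `x ^ 2 ≤ R`, such a factor is at most
`exp (A - |k|)` (`jellium_exponent_le`). Hence, on bounded sets of `(x, y)`, the whole family is
dominated by a constant multiple of `exp (-|k|) * exp (-|k'|)`, which is summable over `ℤ × ℤ`;
this gives summability and the uniform bound at once (`jellium_term_le`). The restriction
`k ≤ k'` plays no role in the estimate.
-/

/-- A Gaussian exponent on the shifted lattice absorbs any linear term `s * k`, with a remainder
`-|k|`, uniformly for `x` in a bounded set. -/
lemma jellium_exponent_le (lam C : ℝ) (hlam : 0 < lam) (hC : 0 < C) (s R : ℝ) :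
    ∃ A : ℝ, ∀ x : ℝ, x ^ 2 ≤ R → ∀ k : ℤ,
      s * k - C * (x - ((k : ℝ) - 1 / 2) * lam) ^ 2 ≤ A - |(k : ℝ)| := by
  refine ⟨C * R + C * lam ^ 2 / 8 + (|s| + 1) ^ 2 / (C * lam ^ 2), fun x hx k => ?_⟩
  have ha : 0 < C * lam ^ 2 := by positivity
  set t : ℝ := ((k : ℝ) - 1 / 2) * lam with ht
  have h1 : C * (t ^ 2 / 2 - R) ≤ C * (x - t) ^ 2 := by
    apply mul_le_mul_of_nonneg_left _ hC.le
    nlinarith [sq_nonneg (2 * x - t)]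
  have h2 : C * lam ^ 2 / 4 * (k : ℝ) ^ 2 - C * lam ^ 2 / 8 ≤ C * (t ^ 2 / 2) := by
    have : 0 ≤ C * lam ^ 2 * ((k : ℝ) - 1) ^ 2 := by positivity
    rw [ht]
    nlinarith
  have h3 : s * k ≤ |s| * |(k : ℝ)| := by
    rw [← abs_mul]
    exact le_abs_self _
  -- Young's inequality for the product `(|s| + 1) * |k|`.
  have h4 : (|s| + 1) * |(k : ℝ)| ≤
      C * lam ^ 2 / 4 * (k : ℝ) ^ 2 + (|s| + 1) ^ 2 / (C * lam ^ 2) := by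
    have h : 0 ≤ (C * lam ^ 2 / 2 * |(k : ℝ)| - (|s| + 1)) ^ 2 / (C * lam ^ 2) := by positivity
    have e : (C * lam ^ 2 / 2 * |(k : ℝ)| - (|s| + 1)) ^ 2 / (C * lam ^ 2) =
        C * lam ^ 2 / 4 * |(k : ℝ)| ^ 2 + (|s| + 1) ^ 2 / (C * lam ^ 2)
          - (|s| + 1) * |(k : ℝ)| := by
      field_simp
      ring
    rw [e, sq_abs] at h
    linarith
  linarith

lemma summable_exp_neg_abs_int : Summable (fun k : ℤ => Real.exp (-|(k : ℝ)|)) := by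
  apply Summable.of_nat_of_neg <;> simpa using Real.summable_exp_neg_nat

/-- The terms are dominated, uniformly for `x ^ 2, y ^ 2 ≤ R`, by a constant multiple of a fixed
summable family. -/
lemma jellium_term_le (lam C D : ℝ) (hlam : 0 < lam) (hC : 0 < C) (hD : 0 < D) (R : ℝ) :
    ∃ B : ℝ, ∀ x y : ℝ, x ^ 2 ≤ R → y ^ 2 ≤ R → ∀ p : ℤ × ℤ,
      (if p.1 ≤ p.2 then
        D ^ (p.2 - p.1) *
          Real.exp (-C * (x - ((p.1 : ℝ) - 1 / 2) * lam) ^ 2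
            - C * (y - ((p.2 : ℝ) - 1 / 2) * lam) ^ 2)
      else 0) ≤ B * (Real.exp (-|(p.1 : ℝ)|) * Real.exp (-|(p.2 : ℝ)|)) := by
  obtain ⟨A₁, h₁⟩ := jellium_exponent_le lam C hlam hC (-Real.log D) R
  obtain ⟨A₂, h₂⟩ := jellium_exponent_le lam C hlam hC (Real.log D) R
  refine ⟨Real.exp (A₁ + A₂), fun x y hx hy p => ?_⟩
  split_ifs
  · have hp : D ^ (p.2 - p.1) = Real.exp (Real.log D * ((p.2 : ℝ) - p.1)) := by
      rw [← Real.rpow_intCast, Real.rpow_def_of_pos hD]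
      push_cast
      rfl
    rw [hp, ← Real.exp_add, ← Real.exp_add, ← Real.exp_add, Real.exp_le_exp]
    linarith [h₁ x hx p.1, h₂ y hy p.2]
  · positivity

/-- Summability estimate (Eq. (34) in the proof of Theorem 2.2(i)) dominating the
winding-number expansion of the one-particle reduced density matrix: for the
lattice `𝓛 = λ/2 + λℤ`, the family
`D^{k'−k} exp(−C(x − (k−1/2)λ)² − C(y − (k'−1/2)λ)²)`, over pairs `k ≤ k'`,
is summable, and the sum is bounded on every compact subset of `ℝ²`. -/
theorem jellium_dominating_sum_summable (lam C D : ℝ)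
    (hlam : 0 < lam) (hC : 0 < C) (hD : 0 < D) :
    (∀ x y : ℝ, Summable (fun p : ℤ × ℤ =>
      if p.1 ≤ p.2 then
        D ^ (p.2 - p.1) *
          Real.exp (-C * (x - ((p.1 : ℝ) - 1 / 2) * lam) ^ 2
            - C * (y - ((p.2 : ℝ) - 1 / 2) * lam) ^ 2)
      else 0)) ∧
    ∀ K : Set (ℝ × ℝ), IsCompact K → ∃ M : ℝ, ∀ q ∈ K,
      (∑' p : ℤ × ℤ,
        if p.1 ≤ p.2 then
          D ^ (p.2 - p.1) *
            Real.exp (-C * (q.1 - ((p.1 : ℝ) - 1 / 2) * lam) ^ 2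
              - C * (q.2 - ((p.2 : ℝ) - 1 / 2) * lam) ^ 2)
        else 0) ≤ M := by
  have hG : Summable (fun p : ℤ × ℤ => Real.exp (-|(p.1 : ℝ)|) * Real.exp (-|(p.2 : ℝ)|)) :=
    summable_exp_neg_abs_int.mul_of_nonneg summable_exp_neg_abs_int
      (fun _ => (Real.exp_pos _).le) (fun _ => (Real.exp_pos _).le)
  have hS : ∀ x y : ℝ, Summable (fun p : ℤ × ℤ =>
      if p.1 ≤ p.2 then
        D ^ (p.2 - p.1) *
          Real.exp (-C * (x - ((p.1 : ℝ) - 1 / 2) * lam) ^ 2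
            - C * (y - ((p.2 : ℝ) - 1 / 2) * lam) ^ 2)
      else 0) := by
    intro x y
    obtain ⟨B, hB⟩ := jellium_term_le lam C D hlam hC hD (max (x ^ 2) (y ^ 2))
    refine Summable.of_nonneg_of_le (fun p => ?_)
      (hB x y (le_max_left _ _) (le_max_right _ _)) (hG.mul_left B)
    split_ifs <;> positivity
  refine ⟨hS, fun K hK => ?_⟩
  obtain ⟨r, hr⟩ := hK.isBounded.exists_norm_le
  obtain ⟨B, hB⟩ := jellium_term_le lam C D hlam hC hD (r ^ 2)
  refine ⟨_, fun q hq => (hS q.1 q.2).tsum_le_tsum (hB q.1 q.2 ?_ ?_) (hG.mul_left B)⟩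
  · exact sq_le_sq' (abs_le.1 ((norm_fst_le q).trans (hr q hq))).1
      (abs_le.1 ((norm_fst_le q).trans (hr q hq))).2
  · exact sq_le_sq' (abs_le.1 ((norm_snd_le q).trans (hr q hq))).1
      (abs_le.1 ((norm_snd_le q).trans (hr q hq))).2
end

section
/- Let (Ω, 𝓕, P) be a probability space, λ > 0, and let (X_j)_{j ∈ ℤ} be real random variables such that almost surely X_j < X_{j+1} for all j ∈ ℤ, and such that there exist C > 0, α > 0 with P(|X_j − (j − 1/2)λ| ≥ m) ≤ C exp(−α m²) for every j ∈ ℤ and every real m ≥ 0. Then there exist constants C' > 0 and α' > 0 such that for all real x < y and every n ∈ ℕ, the probability that the set {j ∈ ℤ : x ≤ X_j < y} is infinite, or is finite with |card{j ∈ ℤ : x ≤ X_j < y} − (y − x)/λ| ≥ n, is at most C' exp(−α' n²). -/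
/-!
The idea is that a deviation of the count forces one of four labelled particles, at deterministic
indices, to be far from its mean. Put `s = (n - 1) / 2`, and for `z ∈ {x, y}` let
`a_z = ⌊z / λ - s⌋` and `b_z = ⌈z / λ + s⌉`. If `X_{a_z} < z ≤ X_{b_z}` for both `z`, monotonicity
in the index gives `[b_x, a_y] ⊆ {j | x ≤ X_j < y} ⊆ (a_x, b_y)`, so the set is finite and its
cardinality differs from `(y - x) / λ` by less than `2 s + 1 = n` (`count_close`). Each of the four
conditions fails only if the corresponding `X_j` is at distance at least `(n / 2 - 1) λ` from
`(j - 1/2) λ`, which for `n ≥ 2` has probability at most `C exp (-α λ² (n / 2 - 1)²)`. Since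
`(n / 2 - 1)² ≥ n² / 8 - 1`, a union bound gives the claim with `α' = α λ² / 8`; the constant `C'`
is enlarged to make the bound trivial for `n ≤ 1`.
-/

open MeasureTheory

/-- Four comparisons at fixed indices `a₁, b₁` (near `p`) and `a₂, b₂` (near `q`) locate the index
set of a strictly increasing sequence in `[x, y)` between `[b₁, a₂]` and `(a₁, b₂)`, and hence
control its cardinality. In the application `p = x / λ` and `q = y / λ`. -/
lemma count_close (u : ℤ → ℝ) (hu : StrictMono u) (x y p q s : ℝ) (hpq : p < q) (hs : 0 ≤ s)
    (h1 : u ⌊p - s⌋ < x) (h2 : x ≤ u ⌈p + s⌉) (h3 : u ⌊q - s⌋ < y) (h4 : y ≤ u ⌈q + s⌉) :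
    {j : ℤ | x ≤ u j ∧ u j < y}.Finite ∧
      |({j : ℤ | x ≤ u j ∧ u j < y}.ncard : ℝ) - (q - p)| < 2 * s + 1 := by
  have hsub : {j : ℤ | x ≤ u j ∧ u j < y} ⊆ ↑(Finset.Ioo ⌊p - s⌋ ⌈q + s⌉) := by
    rintro j ⟨hj1, hj2⟩
    rw [Finset.coe_Ioo]
    exact ⟨hu.lt_iff_lt.1 (h1.trans_le hj1), hu.lt_iff_lt.1 (hj2.trans_le h4)⟩
  have hsup : (↑(Finset.Icc ⌈p + s⌉ ⌊q - s⌋) : Set ℤ) ⊆ {j : ℤ | x ≤ u j ∧ u j < y} := by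
    intro j hj
    rw [Finset.coe_Icc] at hj
    exact ⟨h2.trans (hu.monotone hj.1), (hu.monotone hj.2).trans_lt h3⟩
  have hfin : {j : ℤ | x ≤ u j ∧ u j < y}.Finite := (Finset.finite_toSet _).subset hsub
  refine ⟨hfin, ?_⟩
  have hup := Set.ncard_le_ncard hsub (Finset.finite_toSet _)
  have hlo := Set.ncard_le_ncard hsup hfin
  rw [Set.ncard_coe_finset, Int.card_Ioo] at hup
  rw [Set.ncard_coe_finset, Int.card_Icc] at hlo
  generalize {j : ℤ | x ≤ u j ∧ u j < y}.ncard = N at hup hlo ⊢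
  have f1 := Int.lt_floor_add_one (p - s)
  have f2 := Int.ceil_lt_add_one (p + s)
  have f3 := Int.lt_floor_add_one (q - s)
  have f4 := Int.ceil_lt_add_one (q + s)
  generalize ⌊p - s⌋ = a₁ at *
  generalize ⌈p + s⌉ = b₁ at *
  generalize ⌊q - s⌋ = a₂ at *
  generalize ⌈q + s⌉ = b₂ at *
  have hlo' : a₂ + 1 - b₁ ≤ (N : ℤ) := by omega
  -- `toNat` truncates at `0`, so the case of an empty interval `(a₁, b₂)` is kept apart.
  have hup' : (N : ℤ) = 0 ∨ (N : ℤ) ≤ b₂ - a₁ - 1 := by omega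
  have hlo'' : (a₂ : ℝ) + 1 - b₁ ≤ N := by exact_mod_cast hlo'
  rw [abs_lt]
  refine ⟨by linarith, ?_⟩
  rcases hup' with h | h
  · have : (N : ℝ) = 0 := by exact_mod_cast h
    linarith
  · have : (N : ℝ) ≤ b₂ - a₁ - 1 := by exact_mod_cast h
    linarith

/-- If a sequence stays within `(n / 2 - 1) λ` of `(j - 1/2) λ` at `⌊z / λ - (n - 1) / 2⌋` and
`⌈z / λ + (n - 1) / 2⌉`, its values there lie on either side of `z`. -/
lemma straddle (u : ℤ → ℝ) (lam : ℝ) (hlam : 0 < lam) (z n : ℝ)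
    (h1 : |u ⌊z / lam - (n - 1) / 2⌋ - ((⌊z / lam - (n - 1) / 2⌋ : ℝ) - 1 / 2) * lam|
      < (n / 2 - 1) * lam)
    (h2 : |u ⌈z / lam + (n - 1) / 2⌉ - ((⌈z / lam + (n - 1) / 2⌉ : ℝ) - 1 / 2) * lam|
      < (n / 2 - 1) * lam) :
    u ⌊z / lam - (n - 1) / 2⌋ < z ∧ z ≤ u ⌈z / lam + (n - 1) / 2⌉ := by
  have f1 := mul_le_mul_of_nonneg_right (Int.floor_le (z / lam - (n - 1) / 2)) hlam.le
  have f2 := mul_le_mul_of_nonneg_right (Int.le_ceil (z / lam + (n - 1) / 2)) hlam.le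
  have hz : z / lam * lam = z := div_mul_cancel₀ z hlam.ne'
  rw [sub_mul, hz] at f1
  rw [add_mul, hz] at f2
  have g1 := (abs_lt.1 h1).2
  have g2 := (abs_lt.1 h2).1
  constructor <;> linarith

/-- Lemma 5.1 in abstract form: if `(X_j)_{j ∈ ℤ}` is a.s. strictly increasing
and each `X_j` concentrates around `(j − 1/2)λ` with Gaussian tails, then the
number of particles in `[x, y)` concentrates around `(y − x)/λ` with Gaussian
tails, uniformly in the interval. -/
theorem particle_number_concentration
    {Ω : Type*} [MeasurableSpace Ω] (P : Measure Ω) [IsProbabilityMeasure P]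
    (lam : ℝ) (hlam : 0 < lam) (X : ℤ → Ω → ℝ)
    (hmono : ∀ᵐ ω ∂P, ∀ j : ℤ, X j ω < X (j + 1) ω)
    (C α : ℝ) (hC : 0 < C) (hα : 0 < α)
    (htail : ∀ j : ℤ, ∀ m : ℝ, 0 ≤ m →
      P {ω | m ≤ |X j ω - ((j : ℝ) - 1 / 2) * lam|} ≤
        ENNReal.ofReal (C * Real.exp (-α * m ^ 2))) :
    ∃ C' > (0 : ℝ), ∃ α' > (0 : ℝ), ∀ x y : ℝ, x < y → ∀ n : ℕ,
      P {ω | ¬ {j : ℤ | x ≤ X j ω ∧ X j ω < y}.Finite ∨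
          (n : ℝ) ≤ |({j : ℤ | x ≤ X j ω ∧ X j ω < y}.ncard : ℝ) - (y - x) / lam|} ≤
        ENNReal.ofReal (C' * Real.exp (-α' * n ^ 2)) := by
  have hexp : 0 < Real.exp (α * lam ^ 2) := Real.exp_pos _
  have hexp' : 0 < Real.exp (α * lam ^ 2 / 8) := Real.exp_pos _
  refine ⟨4 * C * Real.exp (α * lam ^ 2) + Real.exp (α * lam ^ 2 / 8), by positivity,
    α * lam ^ 2 / 8, by positivity, fun x y hxy n => ?_⟩
  rcases Nat.lt_or_ge n 2 with hn | hn
  · refine prob_le_one.trans (ENNReal.one_le_ofReal.2 ?_)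
    have hn1 : (n : ℝ) ≤ 1 := by exact_mod_cast Nat.lt_succ_iff.1 hn
    have hn2 : (n : ℝ) ^ 2 ≤ 1 := pow_le_one₀ n.cast_nonneg hn1
    have hk : 0 < α * lam ^ 2 / 8 := by positivity
    calc (1 : ℝ) ≤ Real.exp (α * lam ^ 2 / 8 + -(α * lam ^ 2 / 8) * n ^ 2) :=
          Real.one_le_exp (by nlinarith)
      _ = Real.exp (α * lam ^ 2 / 8) * Real.exp (-(α * lam ^ 2 / 8) * n ^ 2) := Real.exp_add _ _
      _ ≤ _ := by
          gcongr
          exact le_add_of_nonneg_left (by positivity)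
  · have hn2 : (2 : ℝ) ≤ n := by exact_mod_cast hn
    let T : ℤ → Set Ω := fun j =>
      {ω | ((n : ℝ) / 2 - 1) * lam ≤ |X j ω - ((j : ℝ) - 1 / 2) * lam|}
    have hT : ∀ j, P (T j) ≤
        ENNReal.ofReal (C * Real.exp (-α * (((n : ℝ) / 2 - 1) * lam) ^ 2)) := fun j =>
      htail j _ (mul_nonneg (by linarith) hlam.le)
    set a₁ := ⌊x / lam - ((n : ℝ) - 1) / 2⌋ with ha₁
    set b₁ := ⌈x / lam + ((n : ℝ) - 1) / 2⌉ with hb₁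
    set a₂ := ⌊y / lam - ((n : ℝ) - 1) / 2⌋ with ha₂
    set b₂ := ⌈y / lam + ((n : ℝ) - 1) / 2⌉ with hb₂
    have hincl : {ω | ¬ {j : ℤ | x ≤ X j ω ∧ X j ω < y}.Finite ∨
          (n : ℝ) ≤ |({j : ℤ | x ≤ X j ω ∧ X j ω < y}.ncard : ℝ) - (y - x) / lam|}
        ≤ᵐ[P] ((T a₁ ∪ T b₁) ∪ (T a₂ ∪ T b₂) : Set Ω) := by
      filter_upwards [hmono] with ω hω hbad
      by_contra hnot
      have hnot' : ω ∉ (T a₁ ∪ T b₁) ∪ (T a₂ ∪ T b₂) := hnot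
      simp only [T, Set.mem_union, Set.mem_setOf_eq, not_or, not_le] at hnot'
      obtain ⟨⟨t1, t2⟩, t3, t4⟩ := hnot'
      obtain ⟨h1, h2⟩ := straddle (fun j => X j ω) lam hlam x n t1 t2
      obtain ⟨h3, h4⟩ := straddle (fun j => X j ω) lam hlam y n t3 t4
      obtain ⟨hf, hc⟩ := count_close (fun j => X j ω) (strictMono_int_of_lt_succ hω) x y
        (x / lam) (y / lam) (((n : ℝ) - 1) / 2) (by gcongr) (by linarith) h1 h2 h3 h4
      rw [← sub_div] at hc
      rcases hbad with h | h
      · exact h hf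
      · linarith
    have hsq : -α * (((n : ℝ) / 2 - 1) * lam) ^ 2
        ≤ α * lam ^ 2 + -(α * lam ^ 2 / 8) * n ^ 2 := by
      have hk : 0 < α * lam ^ 2 := by positivity
      -- `(n / 2 - 1)² - (n² / 8 - 1) = 2 (n / 4 - 1)²`
      nlinarith [mul_nonneg hk.le (sq_nonneg ((n : ℝ) / 4 - 1))]
    have hc0 : 0 ≤ C * Real.exp (-α * (((n : ℝ) / 2 - 1) * lam) ^ 2) := by positivity
    calc _ ≤ P ((T a₁ ∪ T b₁) ∪ (T a₂ ∪ T b₂)) := measure_mono_ae hincl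
      _ ≤ (P (T a₁) + P (T b₁)) + (P (T a₂) + P (T b₂)) :=
          (measure_union_le _ _).trans (add_le_add (measure_union_le _ _) (measure_union_le _ _))
      _ ≤ _ := add_le_add (add_le_add (hT _) (hT _)) (add_le_add (hT _) (hT _))
      _ = ENNReal.ofReal (4 * C * Real.exp (-α * (((n : ℝ) / 2 - 1) * lam) ^ 2)) := by
          rw [← ENNReal.ofReal_add hc0 hc0, ← ENNReal.ofReal_add (by positivity) (by positivity)]
          congr 1
          ring
      _ ≤ _ := by
          refine ENNReal.ofReal_le_ofReal ?_
          calc _ ≤ 4 * C * Real.exp (α * lam ^ 2 + -(α * lam ^ 2 / 8) * n ^ 2) := by gcongr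
            _ = 4 * C * Real.exp (α * lam ^ 2) * Real.exp (-(α * lam ^ 2 / 8) * n ^ 2) := by
                rw [Real.exp_add, mul_assoc (4 * C)]
            _ ≤ _ := by
                gcongr
                exact le_add_of_nonneg_right hexp'.le
end
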